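/- Let G be a finite simple undirected graph on n vertices. Let Δ_G be the number of triangles in G, Φ_G^(5) the number of subgraphs of G isomorphic to the 5-cycle, and Υ_G the number of subgraphs of G isomorphic to the paw graph (a triangle together with one additional pendant edge attached to one of its vertices). Then the fifth spectral moment satisfies m_5(A_G) = (1/n)[30Δ_G + 10Υ_G + 10Φ_G^(5)], i.e., trace(A_G^5) = 30Δ_G + 10Υ_G + 10Φ_G^(5). -/

import Mathlib

/-! The trace of `A ^ 5` counts the closed walks `a b c d e a` of length five in `G`. Consecutive
vertices of such a walk differ, so the only possible coincidences are between vertices two steps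
apart. Two such coincidences can hold together only if they are consecutive around the walk (any
other pair would identify two adjacent vertices), and three never can. So exactly one of the
following holds:

* all five vertices are distinct, and the walk is a labelled copy of the 5-cycle;
* there is exactly one coincidence (five possible positions), and the walk is a labelled copy of
  the paw, the repeated vertex being the vertex of degree three;
* there are exactly two coincidences (five possible positions), and the walk has the form
  `a b a b e`, that is, it is an ordered triangle.

This is `walk_split`, summed over all walks in `walk_sum_split`. Labelled copies of `g` are counted
by `embeddingFreq g G` times the number of automorphisms of `g` (`card_copy`), which is 10 for the
5-cycle and 2 for the paw; a triangle has 6 orderings (`card_ordered_triangle`). The total is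
`10 Φ + 5 · 2 Υ + 5 · 6 Δ`. -/

open SimpleGraph

/-- The embedding frequency `F(g, G)`: the number of subgraphs of `G` isomorphic to `g`. -/
noncomputable def embeddingFreq {U V : Type*} (g : SimpleGraph U) (G : SimpleGraph V) : ℕ :=
  Nat.card {h : G.Subgraph // Nonempty (h.coe ≃g g)}

/-- The paw graph: a triangle on `{0, 1, 2}` together with one additional pendant edge
`{2, 3}` attached to one of its vertices. -/
def pawGraph : SimpleGraph (Fin 4) :=
  SimpleGraph.fromRel (fun i j =>
    (i = 0 ∧ j = 1) ∨ (i = 0 ∧ j = 2) ∨ (i = 1 ∧ j = 2) ∨ (i = 2 ∧ j = 3))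

/-! ### Labelled copies and automorphisms -/

/-- Labelled copies of `g` with a prescribed image correspond to automorphisms of `g`. -/
lemma card_copy {U V : Type*} [Finite U] [Finite V] (g : SimpleGraph U) (G : SimpleGraph V) :
    Nat.card (Copy g G) = embeddingFreq g G * Nat.card (g ≃g g) := by
  classical
  have : Finite (Copy g G) := DFunLike.finite _
  let F : Copy g G → {h : G.Subgraph // Nonempty (h.coe ≃g g)} :=
    fun f => ⟨f.toSubgraph, ⟨f.isoToSubgraph.symm⟩⟩
  have key : ∀ h, Nat.card {f : Copy g G // F f = h} = Nat.card (g ≃g g) := by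
    rintro ⟨h, ⟨e₀⟩⟩
    -- An automorphism `e` is sent to the copy `e₀⁻¹ ∘ e` with image `h`.
    let Φ : (g ≃g g) → {f : Copy g G // F f = ⟨h, ⟨e₀⟩⟩} := fun e =>
      ⟨h.coeCopy.comp (Iso.toCopy (A := g) (B := h.coe) (e.trans e₀.symm)), by
        apply Subtype.ext
        change Subgraph.map (h.hom.comp (Iso.toHom (G := g) (G' := h.coe) (e.trans e₀.symm))) ⊤ = h
        simp [Subgraph.map_comp]⟩
    symm
    refine Nat.card_eq_of_bijective Φ ⟨?_, ?_⟩
    · intro e e' hee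
      ext u
      have h1 := congrArg (fun f : {f : Copy g G // F f = ⟨h, ⟨e₀⟩⟩} => f.1 u) hee
      have h2 : ((e₀.symm (e u)) : V) = e₀.symm (e' u) := h1
      exact e₀.symm.injective (Subtype.ext h2)
    · rintro ⟨f, hf⟩
      have hf' : f.toSubgraph = h := congrArg Subtype.val hf
      subst hf'
      refine ⟨f.isoToSubgraph.trans e₀, ?_⟩
      apply Subtype.ext
      ext u
      change ((e₀.symm (e₀ (f.isoToSubgraph u))) : V) = f u
      rw [e₀.symm_apply_apply]
      rfl
  have : Finite {h : G.Subgraph // Nonempty (h.coe ≃g g)} := inferInstance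
  have := Fintype.ofFinite {h : G.Subgraph // Nonempty (h.coe ≃g g)}
  rw [← Nat.card_congr (Equiv.sigmaFiberEquiv F), Nat.card_sigma]
  simp [key, embeddingFreq]

/-- An automorphism of a graph as a permutation that preserves adjacency both ways. -/
def isoEquivPerm {U : Type*} (g : SimpleGraph U) :
    (g ≃g g) ≃ {e : Equiv.Perm U // ∀ a b, g.Adj (e a) (e b) ↔ g.Adj a b} where
  toFun e := ⟨e.toEquiv, fun _ _ => e.map_rel_iff⟩
  invFun e := ⟨e.1, fun {a b} => e.2 a b⟩
  left_inv _ := rfl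
  right_inv _ := rfl

instance : DecidableRel pawGraph.Adj := by
  unfold pawGraph; intro a b; rw [fromRel_adj]; infer_instance

lemma card_aut_paw : Nat.card (pawGraph ≃g pawGraph) = 2 := by
  rw [Nat.card_congr (isoEquivPerm _), Nat.card_eq_fintype_card]
  decide +kernel

lemma card_aut_cycle : Nat.card (cycleGraph 5 ≃g cycleGraph 5) = 10 := by
  have h : ∀ a b : Fin 5, (cycleGraph 5).Adj a b ↔ (a - b = 1 ∨ b - a = 1) :=
    fun a b => cycleGraph_adj
  rw [Nat.card_congr (isoEquivPerm _)]
  simp only [h]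
  rw [Nat.card_eq_fintype_card]
  decide +kernel

/-! ### Counting 5-tuples -/

section Count

variable {V : Type*} [Fintype V]

lemma sum_rotate (F : V → V → V → V → V → ℕ) :
    ∑ a, ∑ b, ∑ c, ∑ d, ∑ e, F b c d e a = ∑ a, ∑ b, ∑ c, ∑ d, ∑ e, F a b c d e := by
  rw [Finset.sum_comm]
  refine Finset.sum_congr rfl fun a _ => ?_
  rw [Finset.sum_comm]
  refine Finset.sum_congr rfl fun b _ => ?_
  rw [Finset.sum_comm]
  refine Finset.sum_congr rfl fun c _ => ?_
  rw [Finset.sum_comm]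

/-- The number of 5-tuples satisfying `p`. -/
abbrev count5 (p : V → V → V → V → V → Prop) [∀ a b c d e, Decidable (p a b c d e)] : ℕ :=
  ∑ a, ∑ b, ∑ c, ∑ d, ∑ e, if p a b c d e then 1 else 0

lemma count5_eq_card (p : V → V → V → V → V → Prop) [∀ a b c d e, Decidable (p a b c d e)] :
    count5 p = Nat.card {x : V × V × V × V × V // p x.1 x.2.1 x.2.2.1 x.2.2.2.1 x.2.2.2.2} := by
  rw [Nat.card_eq_fintype_card, Fintype.card_subtype, Finset.card_filter]
  simp only [Fintype.sum_prod_type]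

end Count

/-! ### Classification of closed walks of length five -/

section Walks

variable {V : Type*} (G : SimpleGraph V)

/-- `a b c d e a` is a closed walk of length five. -/
abbrev IsWalk5 (a b c d e : V) : Prop :=
  G.Adj a b ∧ G.Adj b c ∧ G.Adj c d ∧ G.Adj d e ∧ G.Adj e a

/-- A closed walk of length five through distinct vertices. -/
abbrev IsCycle5 (a b c d e : V) : Prop :=
  IsWalk5 G a b c d e ∧ a ≠ c ∧ b ≠ d ∧ c ≠ e ∧ d ≠ a ∧ e ≠ b

/-- A closed walk of length five whose only coincidence is `a = c`: the triangle `a d e` with the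
pendant vertex `b` at `a`. -/
abbrev IsPaw5 (a b c d e : V) : Prop :=
  IsWalk5 G a b c d e ∧ a = c ∧ b ≠ d ∧ e ≠ b

/-- A closed walk of length five of the form `a b a b e`. -/
abbrev IsTri5 (a b c d e : V) : Prop :=
  IsWalk5 G a b c d e ∧ a = c ∧ b = d

variable [DecidableEq V] [DecidableRel G.Adj]

lemma walk_split (a b c d e : V) :
    (if IsWalk5 G a b c d e then 1 else 0 : ℕ) =
      (if IsCycle5 G a b c d e then 1 else 0)
      + ((if IsPaw5 G a b c d e then 1 else 0) + (if IsPaw5 G b c d e a then 1 else 0)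
        + (if IsPaw5 G c d e a b then 1 else 0) + (if IsPaw5 G d e a b c then 1 else 0)
        + (if IsPaw5 G e a b c d then 1 else 0))
      + ((if IsTri5 G a b c d e then 1 else 0) + (if IsTri5 G b c d e a then 1 else 0)
        + (if IsTri5 G c d e a b then 1 else 0) + (if IsTri5 G d e a b c then 1 else 0)
        + (if IsTri5 G e a b c d then 1 else 0)) := by
  by_cases h : IsWalk5 G a b c d e
  · obtain ⟨h1, h2, h3, h4, h5⟩ := h
    have n1 := h1.ne
    have n2 := h2.ne
    have n3 := h3.ne
    have n4 := h4.ne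
    have n5 := h5.ne
    simp only [IsWalk5, IsCycle5, IsPaw5, IsTri5, h1, h2, h3, h4, h5, true_and, if_true]
    clear h1 h2 h3 h4 h5
    by_cases x1 : a = c <;> by_cases x2 : b = d <;> by_cases x3 : c = e <;>
      by_cases x4 : d = a <;> by_cases x5 : e = b <;> grind
  · have r1 : ¬ IsWalk5 G b c d e a := by tauto
    have r2 : ¬ IsWalk5 G c d e a b := by tauto
    have r3 : ¬ IsWalk5 G d e a b c := by tauto
    have r4 : ¬ IsWalk5 G e a b c d := by tauto
    simp only [IsCycle5, IsPaw5, IsTri5, h, r1, r2, r3, r4, false_and, if_false]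

variable [Fintype V]

lemma walk_sum_split :
    count5 (IsWalk5 G) = count5 (IsCycle5 G) + 5 * count5 (IsPaw5 G) + 5 * count5 (IsTri5 G) := by
  have rot : ∀ F : V → V → V → V → V → ℕ,
      ∑ a, ∑ b, ∑ c, ∑ d, ∑ e, (F a b c d e + F b c d e a + F c d e a b + F d e a b c
        + F e a b c d) = 5 * ∑ a, ∑ b, ∑ c, ∑ d, ∑ e, F a b c d e := by
    intro F
    simp only [Finset.sum_add_distrib]
    have e1 := sum_rotate F
    have e2 := sum_rotate fun a b c d e => F b c d e a
    have e3 := sum_rotate fun a b c d e => F c d e a b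
    have e4 := sum_rotate fun a b c d e => F d e a b c
    omega
  have h1 := rot fun a b c d e => if IsPaw5 G a b c d e then 1 else 0
  have h2 := rot fun a b c d e => if IsTri5 G a b c d e then 1 else 0
  unfold count5
  rw [← h1, ← h2]
  simp only [← Finset.sum_add_distrib]
  simp only [walk_split G]

lemma trace_eq_count5 : Matrix.trace (G.adjMatrix ℝ ^ 5) = (count5 (IsWalk5 G) : ℝ) := by
  have h : ∀ a b c d e : V, ((if IsWalk5 G a b c d e then 1 else 0 : ℕ) : ℝ) =
      G.adjMatrix ℝ a b * (G.adjMatrix ℝ b c * (G.adjMatrix ℝ c d *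
        (G.adjMatrix ℝ d e * G.adjMatrix ℝ e a))) := by
    intro a b c d e
    simp only [adjMatrix_apply, IsWalk5]
    by_cases h1 : G.Adj a b <;> by_cases h2 : G.Adj b c <;> by_cases h3 : G.Adj c d <;>
      by_cases h4 : G.Adj d e <;> by_cases h5 : G.Adj e a <;> simp [h1, h2, h3, h4, h5]
  simp only [count5, Nat.cast_sum, h, ← Finset.mul_sum, Matrix.trace, Matrix.diag, pow_succ',
    pow_zero, mul_one, Matrix.mul_apply]

end Walks

/-! ### The three kinds of walk as labelled copies -/

section Copies

variable {V : Type*} (G : SimpleGraph V)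

lemma cycleGraph_five_adj (a b : Fin 5) :
    (cycleGraph 5).Adj a b ↔ (a - b = 1 ∨ b - a = 1) := cycleGraph_adj

variable {G} in
lemma IsCycle5.adj {a b c d e : V} (h : IsCycle5 G a b c d e) {i j : Fin 5}
    (hij : (cycleGraph 5).Adj i j) : G.Adj (![a, b, c, d, e] i) (![a, b, c, d, e] j) := by
  obtain ⟨⟨h1, h2, h3, h4, h5⟩, -⟩ := h
  rw [cycleGraph_five_adj] at hij
  fin_cases i <;> fin_cases j <;> first
    | exact absurd hij (by decide)
    | assumption
    | exact G.adj_symm (by assumption)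

variable {G} in
lemma IsCycle5.injective {a b c d e : V} (h : IsCycle5 G a b c d e) :
    Function.Injective ![a, b, c, d, e] := by
  obtain ⟨⟨h1, h2, h3, h4, h5⟩, m1, m2, m3, m4, m5⟩ := h
  have n1 := h1.ne
  have n2 := h2.ne
  have n3 := h3.ne
  have n4 := h4.ne
  have n5 := h5.ne
  intro i j hij
  fin_cases i <;> fin_cases j <;> first
    | rfl
    | exact absurd hij (by assumption)
    | exact absurd hij.symm (by assumption)

variable {G} in
lemma IsPaw5.adj {a b c d e : V} (h : IsPaw5 G a b c d e) {i j : Fin 4}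
    (hij : pawGraph.Adj i j) : G.Adj (![d, e, a, b] i) (![d, e, a, b] j) := by
  obtain ⟨⟨h1, h2, h3, h4, h5⟩, rfl, -⟩ := h
  fin_cases i <;> fin_cases j <;> first
    | exact absurd hij (by decide)
    | assumption
    | exact G.adj_symm (by assumption)

variable {G} in
lemma IsPaw5.injective {a b c d e : V} (h : IsPaw5 G a b c d e) :
    Function.Injective ![d, e, a, b] := by
  obtain ⟨⟨h1, h2, h3, h4, h5⟩, rfl, m1, m2⟩ := h
  have n1 := h1.ne
  have n3 := h3.ne
  have n4 := h4.ne
  have n5 := h5.ne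
  intro i j hij
  fin_cases i <;> fin_cases j <;> first
    | rfl
    | exact absurd hij (by assumption)
    | exact absurd hij.symm (by assumption)

variable [Fintype V] [DecidableEq V] [DecidableRel G.Adj]

lemma count5_cycle : count5 (IsCycle5 G) = 10 * embeddingFreq (cycleGraph 5) G := by
  rw [count5_eq_card, mul_comm, ← card_aut_cycle, ← card_copy]
  have back (f : Copy (cycleGraph 5) G) : IsCycle5 G (f 0) (f 1) (f 2) (f 3) (f 4) := by
    have ha : ∀ i j, (cycleGraph 5).Adj i j → G.Adj (f i) (f j) := fun i j h => f.toHom.map_adj h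
    have hi : ∀ i j : Fin 5, i ≠ j → f i ≠ f j := fun i j h => f.injective.ne h
    simp only [cycleGraph_five_adj] at ha
    refine ⟨⟨ha _ _ ?_, ha _ _ ?_, ha _ _ ?_, ha _ _ ?_, ha _ _ ?_⟩,
      hi _ _ ?_, hi _ _ ?_, hi _ _ ?_, hi _ _ ?_, hi _ _ ?_⟩ <;> decide
  refine Nat.card_congr
    { toFun := fun x => ⟨⟨![x.1.1, x.1.2.1, x.1.2.2.1, x.1.2.2.2.1, x.1.2.2.2.2],
        fun h => IsCycle5.adj x.2 h⟩, IsCycle5.injective x.2⟩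
      invFun := fun f => ⟨(f 0, f 1, f 2, f 3, f 4), back f⟩
      left_inv := fun x => rfl
      right_inv := fun f => ?_ }
  ext i
  fin_cases i <;> rfl

lemma count5_paw : count5 (IsPaw5 G) = 2 * embeddingFreq pawGraph G := by
  rw [count5_eq_card, mul_comm, ← card_aut_paw, ← card_copy]
  have back (f : Copy pawGraph G) : IsPaw5 G (f 2) (f 3) (f 2) (f 0) (f 1) := by
    have ha : ∀ i j, pawGraph.Adj i j → G.Adj (f i) (f j) := fun i j h => f.toHom.map_adj h
    have hi : ∀ i j : Fin 4, i ≠ j → f i ≠ f j := fun i j h => f.injective.ne h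
    refine ⟨⟨ha _ _ ?_, ha _ _ ?_, ha _ _ ?_, ha _ _ ?_, ha _ _ ?_⟩, rfl,
      hi _ _ ?_, hi _ _ ?_⟩ <;> decide
  -- The walk `a b a d e` is the paw with triangle `d e a` and pendant vertex `b` at `a`.
  refine Nat.card_congr
    { toFun := fun x => ⟨⟨![x.1.2.2.2.1, x.1.2.2.2.2, x.1.1, x.1.2.1],
        fun h => IsPaw5.adj x.2 h⟩, IsPaw5.injective x.2⟩
      invFun := fun f => ⟨(f 2, f 3, f 2, f 0, f 1), back f⟩
      left_inv := fun x => ?_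
      right_inv := fun f => ?_ }
  · obtain ⟨⟨a, b, c, d, e⟩, hw⟩ := x
    obtain rfl : a = c := hw.2.1
    rfl
  · ext i
    fin_cases i <;> rfl

lemma card_ordered_triangle :
    (Finset.univ.filter fun x : V × V × V =>
      G.Adj x.1 x.2.1 ∧ G.Adj x.1 x.2.2 ∧ G.Adj x.2.1 x.2.2).card
      = 6 * (G.cliqueFinset 3).card := by
  rw [mul_comm]
  rw [Finset.card_eq_sum_card_fiberwise (f := fun x : V × V × V => ({x.1, x.2.1, x.2.2} : Finset V))
    (t := G.cliqueFinset 3), Finset.sum_const_nat]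
  · intro s hs
    obtain ⟨a, b, c, hab, hac, hbc, rfl⟩ := is3Clique_iff.1 ((mem_cliqueFinset_iff).1 hs)
    have n1 := hab.ne
    have n2 := hac.ne
    have n3 := hbc.ne
    have : (Finset.filter (fun x : V × V × V => ({x.1, x.2.1, x.2.2} : Finset V) = {a, b, c})
        (Finset.univ.filter fun x : V × V × V =>
          G.Adj x.1 x.2.1 ∧ G.Adj x.1 x.2.2 ∧ G.Adj x.2.1 x.2.2))
        = {(a, b, c), (a, c, b), (b, a, c), (b, c, a), (c, a, b), (c, b, a)} := by
      ext ⟨x, y, z⟩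
      simp only [Finset.mem_filter, Finset.mem_univ, true_and, Finset.mem_insert,
        Finset.mem_singleton, Prod.mk.injEq]
      constructor
      · rintro ⟨⟨h1, h2, h3⟩, h⟩
        have m1 := h1.ne
        have m2 := h2.ne
        have m3 := h3.ne
        have hx : x ∈ ({a, b, c} : Finset V) := by rw [← h]; simp
        have hy : y ∈ ({a, b, c} : Finset V) := by rw [← h]; simp
        have hz : z ∈ ({a, b, c} : Finset V) := by rw [← h]; simp
        simp only [Finset.mem_insert, Finset.mem_singleton] at hx hy hz
        clear h h1 h2 h3
        grind
      · have := hab.symm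
        have := hac.symm
        have := hbc.symm
        rintro (⟨rfl, rfl, rfl⟩ | ⟨rfl, rfl, rfl⟩ | ⟨rfl, rfl, rfl⟩ | ⟨rfl, rfl, rfl⟩ |
          ⟨rfl, rfl, rfl⟩ | ⟨rfl, rfl, rfl⟩) <;>
        refine ⟨⟨by assumption, by assumption, by assumption⟩, ?_⟩ <;>
        (ext w; simp only [Finset.mem_insert, Finset.mem_singleton] <;> tauto)
    rw [this]
    simp [Finset.card_insert_of_notMem, n1, n2, n3, n1.symm, n2.symm, n3.symm]
  · rintro ⟨a, b, c⟩ h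
    simp only [Finset.coe_filter, Finset.mem_univ, true_and, Set.mem_ofPred_eq] at h
    simpa [is3Clique_triple_iff] using h

lemma count5_tri : count5 (IsTri5 G) = 6 * (G.cliqueFinset 3).card := by
  rw [count5_eq_card, ← card_ordered_triangle, ← Fintype.card_subtype, ← Nat.card_eq_fintype_card]
  -- The walk `a b a b e` is the ordered triangle `(a, b, e)`.
  refine Nat.card_congr
    { toFun := fun x => ⟨(x.1.1, x.1.2.1, x.1.2.2.2.2), ?_⟩
      invFun := fun x => ⟨(x.1.1, x.1.2.1, x.1.1, x.1.2.1, x.1.2.2), ?_⟩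
      left_inv := fun x => ?_
      right_inv := fun x => rfl }
  · obtain ⟨⟨a, b, c, d, e⟩, ⟨h1, h2, h3, h4, h5⟩, n, m⟩ := x
    obtain rfl : a = c := n
    obtain rfl : b = d := m
    exact ⟨h1, h5.symm, h4⟩
  · obtain ⟨⟨a, b, e⟩, h1, h2, h3⟩ := x
    exact ⟨⟨h1, h1.symm, h1, h3, h2.symm⟩, rfl, rfl⟩
  · obtain ⟨⟨a, b, c, d, e⟩, -, n, m⟩ := x
    obtain rfl : a = c := n
    obtain rfl : b = d := m
    rfl

end Copies

/-- For a finite simple graph `G` on `n` vertices with `Δ_G` triangles,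
`Φ_G^(5)` five-cycles, and `Υ_G` paw subgraphs, the fifth spectral moment satisfies
`m_5(A_G) = (1/n)[30 Δ_G + 10 Υ_G + 10 Φ_G^(5)]`, i.e.
`trace(A_G^5) = 30 Δ_G + 10 Υ_G + 10 Φ_G^(5)`. -/
theorem fifth_moment_from_subgraphs
    {V : Type*} [Fintype V] [DecidableEq V] (G : SimpleGraph V) [DecidableRel G.Adj] :
    Matrix.trace (G.adjMatrix ℝ ^ 5)
      = 30 * ((G.cliqueFinset 3).card : ℝ) + 10 * (embeddingFreq pawGraph G : ℝ)
        + 10 * (embeddingFreq (cycleGraph 5) G : ℝ)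
    ∧ (Fintype.card V : ℝ)⁻¹ * Matrix.trace (G.adjMatrix ℝ ^ 5)
      = (Fintype.card V : ℝ)⁻¹
        * (30 * ((G.cliqueFinset 3).card : ℝ) + 10 * (embeddingFreq pawGraph G : ℝ)
            + 10 * (embeddingFreq (cycleGraph 5) G : ℝ)) := by
  have h : Matrix.trace (G.adjMatrix ℝ ^ 5)
      = 30 * ((G.cliqueFinset 3).card : ℝ) + 10 * (embeddingFreq pawGraph G : ℝ)
        + 10 * (embeddingFreq (cycleGraph 5) G : ℝ) := by
    rw [trace_eq_count5, walk_sum_split, count5_cycle, count5_paw, count5_tri]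
    push_cast
    ring
  exact ⟨h, by rw [h]⟩
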